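/- arXiv:2308.06364 — 7 statements merged into one kernel-verified Lean document; each statement's English description precedes it below -/
import Mathlib

section
/- Let N be a positive integer with base-φ representation given by the finite set S of integers (so S contains no two consecutive integers and N = Σ_{i∈S} φ^i). Assume S contains at least one positive element, and let i be the smallest positive element of S. If i is odd, then N = Σ_{k∈S, k>0} L_k + d_0 + 1. -/
/-- The golden ratio φ = (1+√5)/2. -/
noncomputable def goldenPhi : ℝ := (1 + Real.sqrt 5) / 2

/-- The algebraic conjugate φ̄ = (1−√5)/2. -/
noncomputable def goldenPhiBar : ℝ := (1 - Real.sqrt 5) / 2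

/-- Lucas numbers extended to all integer indices: L n = φ^n + φ̄^n. -/
noncomputable def LucasR (n : ℤ) : ℝ := goldenPhi ^ n + goldenPhiBar ^ n

/-!
Splitting `N = ∑ φ ^ k` by the sign of `k` and writing `φ ^ k = L_k - ψ ^ k` for `k > 0` gives
`N = ∑_{k > 0} L_k + d₀ + (B - A)` with `B = ∑_{k < 0} φ ^ k` and `A = ∑_{k > 0} ψ ^ k`, where `ψ`
is the conjugate of `φ`. Lucas numbers are integers, hence so is `B - A`, and it suffices to show
`0 < B - A < 2`.

A sum of powers `φ ^ k` over pairwise non-consecutive exponents `k < m` is less than `φ ^ m`,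
because `φ ^ a + φ ^ (a - 1) = φ ^ (a + 1)`. This bounds `B` by `1`, and, as `|ψ| = φ⁻¹`, also `|A|`
by `1`. The same bound shows that the lowest term of `A` outweighs all the others; its exponent is
odd and `ψ < 0`, so `A < 0`.
-/

/-- The exponent sets of base-`φ` representations in normal form: sets of integers containing no two
consecutive ones. -/
def NoConsecutive (S : Finset ℤ) : Prop := ∀ k ∈ S, k + 1 ∉ S

namespace NoConsecutive

open scoped Pointwise

variable {S T : Finset ℤ} {i m : ℤ}

lemma mono (hT : NoConsecutive T) (hST : S ⊆ T) : NoConsecutive S :=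
  fun k hk hk' => hT k (hST hk) (hST hk')

lemma neg (hS : NoConsecutive S) : NoConsecutive (-S) := by
  intro k hk hk'
  rw [Finset.mem_neg'] at hk hk'
  refine hS _ hk' ?_
  rwa [neg_add, neg_add_cancel_right]

lemma add_one_lt_of_lt (hS : NoConsecutive S) {a b : ℤ} (ha : a ∈ S) (hb : b ∈ S) (hab : a < b) :
    a + 1 < b :=
  lt_of_le_of_ne hab fun h => hS a ha (h ▸ hb)

variable {K : Type*} [Field K] [LinearOrder K] [IsStrictOrderedRing K] {x : K}

theorem sum_zpow_lt_of_forall_lt (hS : NoConsecutive S) (hx : 0 < x) (hx2 : x + 1 ≤ x ^ 2)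
    (hm : ∀ k ∈ S, k < m) : ∑ k ∈ S, x ^ k < x ^ m := by
  have one_le_x : 1 ≤ x := by nlinarith
  induction S using Finset.induction_on_max generalizing m with
  | empty => simpa using zpow_pos hx m
  | insert a S ha ih =>
    have sum_lt : ∑ k ∈ S, x ^ k < x ^ (a - 1) :=
      ih (hS.mono (Finset.subset_insert a S)) fun k hk => lt_sub_iff_add_lt.2 <|
        hS.add_one_lt_of_lt (Finset.mem_insert_of_mem hk) (Finset.mem_insert_self a S) (ha k hk)
    calc ∑ k ∈ insert a S, x ^ k
        = x ^ a + ∑ k ∈ S, x ^ k := Finset.sum_insert fun h => (ha a h).false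
      _ < x ^ a + x ^ (a - 1) := by gcongr
      _ = x ^ (a - 1) * (x + 1) := by rw [mul_add_one, ← zpow_add_one₀ hx.ne', sub_add_cancel]
      _ ≤ x ^ (a - 1) * x ^ 2 := by gcongr
      _ = x ^ (a + 1) := by
        rw [← zpow_natCast x 2, ← zpow_add₀ hx.ne']
        congr 1
        push_cast
        ring
      _ ≤ x ^ m := zpow_le_zpow_right₀ one_le_x (hm a (Finset.mem_insert_self a S))

theorem sum_zpow_lt_of_forall_gt (hS : NoConsecutive S) (hx : 0 < x) (hx2 : x ^ 2 + x ≤ 1)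
    (hm : ∀ k ∈ S, m < k) : ∑ k ∈ S, x ^ k < x ^ m := by
  have inv_add_one_le : x⁻¹ + 1 ≤ x⁻¹ ^ 2 := by
    field_simp
    linarith
  have h := hS.neg.sum_zpow_lt_of_forall_lt (m := -m) (inv_pos.2 hx) inv_add_one_le fun k hk =>
    lt_neg_of_lt_neg (hm (-k) (Finset.mem_neg'.1 hk))
  simpa only [Finset.sum_neg_index, inv_zpow', neg_neg] using h

theorem abs_sum_zpow_lt (hS : NoConsecutive S) (hx : x ≠ 0) (hx2 : |x| ^ 2 + |x| ≤ 1)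
    (hm : ∀ k ∈ S, m < k) : |∑ k ∈ S, x ^ k| < |x| ^ m :=
  calc |∑ k ∈ S, x ^ k|
      ≤ ∑ k ∈ S, |x ^ k| := Finset.abs_sum_le_sum_abs _ _
    _ = ∑ k ∈ S, |x| ^ k := by simp only [abs_zpow]
    _ < |x| ^ m := hS.sum_zpow_lt_of_forall_gt (abs_pos.2 hx) hx2 hm

theorem abs_sum_erase_zpow_lt (hS : NoConsecutive S) (hx : x ≠ 0) (hx2 : |x| ^ 2 + |x| ≤ 1)
    (hi : IsLeast (S : Set ℤ) i) : |∑ k ∈ S.erase i, x ^ k| < |x ^ i| := by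
  have add_one_lt : ∀ k ∈ S.erase i, i + 1 < k := fun k hk => by
    obtain ⟨hki, hkS⟩ := Finset.mem_erase.1 hk
    exact hS.add_one_lt_of_lt hi.1 hkS (lt_of_le_of_ne (hi.2 hkS) hki.symm)
  have abs_le_one : |x| ≤ 1 := by nlinarith [sq_nonneg |x|]
  calc |∑ k ∈ S.erase i, x ^ k|
      < |x| ^ (i + 1) := (hS.mono (Finset.erase_subset i S)).abs_sum_zpow_lt hx hx2 add_one_lt
    _ ≤ |x| ^ i := zpow_le_zpow_right_of_le_one₀ (abs_pos.2 hx) abs_le_one (by lia)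
    _ = |x ^ i| := (abs_zpow x i).symm

theorem sum_zpow_neg_of_odd (hS : NoConsecutive S) (hx : x < 0) (hx2 : |x| ^ 2 + |x| ≤ 1)
    (hi : IsLeast (S : Set ℤ) i) (hodd : Odd i) : ∑ k ∈ S, x ^ k < 0 := by
  have lowest_neg : x ^ i < 0 := hodd.zpow_neg hx
  have rest_lt : ∑ k ∈ S.erase i, x ^ k < -x ^ i := by
    rw [← abs_of_neg lowest_neg]
    exact (le_abs_self _).trans_lt (hS.abs_sum_erase_zpow_lt hx.ne hx2 hi)
  rw [← Finset.add_sum_erase S _ hi.1]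
  linarith

end NoConsecutive

lemma sum_eq_sum_filter_gt_add_ite_add_sum_filter_lt {ι M : Type*} [LinearOrder ι]
    [AddCommMonoid M] (S : Finset ι) (a : ι) (f : ι → M) :
    ∑ k ∈ S, f k =
      ∑ k ∈ S with a < k, f k + (if a ∈ S then f a else 0) + ∑ k ∈ S with k < a, f k := by
  rw [← Finset.sum_ite_eq' S a f, Finset.sum_filter, Finset.sum_filter, ← Finset.sum_add_distrib,
    ← Finset.sum_add_distrib]
  refine Finset.sum_congr rfl fun k _ => ?_
  rcases lt_trichotomy k a with h | rfl | h
  · simp [h, h.ne, h.not_gt]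
  · simp
  · simp [h, h.ne', h.not_gt]

lemma pow_add_pow_mem {A : Type*} [CommRing A] (R : Subring A) {a b : A} (hadd : a + b ∈ R)
    (hmul : a * b ∈ R) (n : ℕ) : a ^ n + b ^ n ∈ R := by
  induction n using Nat.twoStepInduction with
  | zero => simpa using add_mem R.one_mem R.one_mem
  | one => simpa using hadd
  | more n ih ih' =>
    have newton : a ^ (n + 2) + b ^ (n + 2) =
        (a + b) * (a ^ (n + 1) + b ^ (n + 1)) - a * b * (a ^ n + b ^ n) := by ring
    rw [newton]
    exact sub_mem (mul_mem hadd ih') (mul_mem hmul ih)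

section GoldenRatio

open scoped goldenRatio

lemma goldenPhi_eq_goldenRatio : goldenPhi = φ := rfl

lemma lucasR_eq (k : ℤ) : LucasR k = φ ^ k + ψ ^ k := rfl

lemma abs_goldenConj_sq_add_abs_goldenConj : |ψ| ^ 2 + |ψ| = 1 := by
  rw [sq_abs, abs_of_neg Real.goldenConj_neg, Real.goldenConj_sq]
  ring

theorem lucasR_mem_range_intCast (k : ℤ) : LucasR k ∈ (Int.castRingHom ℝ).range := by
  rw [lucasR_eq]
  obtain ⟨n, rfl | rfl⟩ := k.eq_nat_or_neg
  · simp only [zpow_natCast]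
    apply pow_add_pow_mem
    · rw [Real.goldenRatio_add_goldenConj]
      exact one_mem _
    · rw [Real.goldenRatio_mul_goldenConj]
      exact neg_mem (one_mem _)
  · simp only [zpow_neg, zpow_natCast, ← inv_pow, Real.inv_goldenRatio, Real.inv_goldenConj]
    apply pow_add_pow_mem
    · rw [← neg_add, add_comm, Real.goldenRatio_add_goldenConj]
      exact neg_mem (one_mem _)
    · rw [neg_mul_neg, Real.goldenConj_mul_goldenRatio]
      exact neg_mem (one_mem _)

/-- The difference `N - ∑_{k > 0} L_k - d₀` for `N = ∑ φ ^ k`, written as a sum over the negative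
exponents minus a conjugate sum over the positive ones. -/
noncomputable def lucasDefect (S : Finset ℤ) : ℝ :=
  ∑ k ∈ S with k < 0, φ ^ k - ∑ k ∈ S with 0 < k, ψ ^ k

theorem sum_goldenRatio_zpow (S : Finset ℤ) :
    ∑ k ∈ S, φ ^ k =
      ∑ k ∈ S with 0 < k, LucasR k + (if 0 ∈ S then 1 else 0) + lucasDefect S := by
  rw [sum_eq_sum_filter_gt_add_ite_add_sum_filter_lt S 0, zpow_zero, lucasDefect]
  simp only [lucasR_eq, Finset.sum_add_distrib]
  ring

variable {S : Finset ℤ}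

lemma lucasDefect_mem_range_intCast {z : ℤ} (hz : (z : ℝ) = ∑ k ∈ S, φ ^ k) :
    lucasDefect S ∈ (Int.castRingHom ℝ).range := by
  have defect_eq : lucasDefect S =
      z - ∑ k ∈ S with 0 < k, LucasR k - (if 0 ∈ S then 1 else 0) := by
    rw [hz, sum_goldenRatio_zpow]
    ring
  rw [defect_eq]
  refine sub_mem (sub_mem (intCast_mem _ z) (sum_mem fun k _ => lucasR_mem_range_intCast k)) ?_
  split_ifs
  · exact one_mem _
  · exact zero_mem _

lemma lucasDefect_lt_two (hS : NoConsecutive S) : lucasDefect S < 2 := by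
  have neg_part_lt : ∑ k ∈ S with k < 0, φ ^ k < 1 := by
    simpa only [zpow_zero] using
      (hS.mono (Finset.filter_subset _ S)).sum_zpow_lt_of_forall_lt (m := 0)
        Real.goldenRatio_pos Real.goldenRatio_sq.ge fun k hk => (Finset.mem_filter.1 hk).2
  have abs_pos_part_lt : |∑ k ∈ S with 0 < k, ψ ^ k| < 1 := by
    simpa only [zpow_zero] using
      (hS.mono (Finset.filter_subset _ S)).abs_sum_zpow_lt (m := 0)
        Real.goldenConj_ne_zero abs_goldenConj_sq_add_abs_goldenConj.le
        fun k hk => (Finset.mem_filter.1 hk).2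
  rw [lucasDefect]
  linarith [(abs_lt.1 abs_pos_part_lt).1]

lemma lucasDefect_pos {i : ℤ} (hS : NoConsecutive S) (hi : IsLeast {k | k ∈ S ∧ 0 < k} i)
    (hodd : Odd i) : 0 < lucasDefect S := by
  have neg_part_nonneg : 0 ≤ ∑ k ∈ S with k < 0, φ ^ k :=
    Finset.sum_nonneg fun k _ => (zpow_pos Real.goldenRatio_pos k).le
  have pos_part_neg : ∑ k ∈ S with 0 < k, ψ ^ k < 0 :=
    (hS.mono (Finset.filter_subset _ S)).sum_zpow_neg_of_odd Real.goldenConj_neg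
      abs_goldenConj_sq_add_abs_goldenConj.le (by rwa [Finset.coe_filter]) hodd
  rw [lucasDefect]
  linarith

theorem lucasDefect_eq_one {i z : ℤ} (hS : NoConsecutive S) (hz : (z : ℝ) = ∑ k ∈ S, φ ^ k)
    (hi : IsLeast {k | k ∈ S ∧ 0 < k} i) (hodd : Odd i) : lucasDefect S = 1 := by
  obtain ⟨d, hd⟩ := lucasDefect_mem_range_intCast hz
  rw [eq_intCast] at hd
  have defect_pos : 0 < d := by exact_mod_cast hd ▸ lucasDefect_pos hS hi hodd
  have defect_lt_two : d < 2 := by exact_mod_cast hd ▸ lucasDefect_lt_two hS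
  rw [← hd, show d = 1 by lia, Int.cast_one]

end GoldenRatio

/-- Theorem 1 (odd case): if the smallest positive index `i` in the base-φ
representation `S` of `N` is odd, then `N = Σ_{k∈S, k>0} L_k + d_0 + 1`. -/
theorem stmt_0 (N : ℕ) (hN : 0 < N) (S : Finset ℤ)
    (hnc : ∀ k ∈ S, k + 1 ∉ S)
    (hrep : (N : ℝ) = ∑ k ∈ S, goldenPhi ^ k)
    (i : ℤ) (hiS : i ∈ S) (hipos : 0 < i)
    (hmin : ∀ j ∈ S, 0 < j → i ≤ j)
    (hodd : Odd i) :
    (N : ℝ) = (∑ k ∈ S.filter (fun k => 0 < k), LucasR k) +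
      (if (0 : ℤ) ∈ S then 1 else 0) + 1 := by
  rw [goldenPhi_eq_goldenRatio] at hrep
  have hi : IsLeast {k | k ∈ S ∧ 0 < k} i := ⟨⟨hiS, hipos⟩, fun j hj => hmin j hj.1 hj.2⟩
  have defect_eq_one : lucasDefect S = 1 :=
    lucasDefect_eq_one (z := N) hnc (by rwa [Int.cast_natCast]) hi hodd
  rw [hrep, sum_goldenRatio_zpow, defect_eq_one]
end

section
/- Let N be a positive integer with base-φ representation given by the finite set S of integers (so S contains no two consecutive integers and N = Σ_{i∈S} φ^i). Assume S contains at least one positive element, and let i be the smallest positive element of S. If i is odd, then N = Σ_{k∈S, k<0} (−1)^{|k|} L_{|k|} + d_0 − 1 (equivalently, N = Σ_{k∈S, k<0} L_k + d_0 − 1, with Lucas numbers extended to negative indices by L_{−n} = (−1)^n L_n). -/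
/-!
Conjugating `N = ∑_{k ∈ S} φ^k` gives `N = ∑_{k ∈ S} ψ^k`, where `ψ = φ̄`. Put
`A = ∑_{k ∈ S, k < 0} φ^k` and `B = ∑_{k ∈ S, k > 0} ψ^k`. Then `∑_{k ∈ S, k < 0} L_k` is
`A + (N - d₀ - B)`, so the claim is `A - B = 1`, and `A - B` is an integer because Lucas numbers
are. It therefore suffices that `0 < A - B < 2`.

A sum of powers of `φ` with nonconsecutive exponents at most `m` is less than `φ^(m+1)`, whence
`0 ≤ A < 1` and, as `|ψ| = φ⁻¹`, also `|B| < 1`. The same estimate shows that the term `ψ^i` of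
least exponent outweighs the other terms of `B` together; it is negative for odd `i`, so `B < 0`.
-/

open Finset Real
open scoped goldenRatio Pointwise

/-- No two elements of the finite set of exponents `S` are consecutive integers: the condition
that makes base-`φ` representations unique. -/
def IsNonconsecutive (S : Finset ℤ) : Prop := ∀ k ∈ S, k + 1 ∉ S

namespace IsNonconsecutive

variable {S T : Finset ℤ}

lemma mono (hS : IsNonconsecutive S) (hTS : T ⊆ S) : IsNonconsecutive T :=
  fun k hk hk' ↦ hS k (hTS hk) (hTS hk')

lemma neg (hS : IsNonconsecutive S) : IsNonconsecutive (-S) := by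
  intro k hk hk'
  rw [mem_neg'] at hk hk'
  exact hS _ hk' (by rwa [neg_add, neg_add_cancel_right])

lemma add_two_le (hS : IsNonconsecutive S) {j k : ℤ} (hj : j ∈ S) (hk : k ∈ S) (hjk : j < k) :
    j + 2 ≤ k := by
  have hne : k ≠ j + 1 := fun h ↦ hS j hj (h ▸ hk)
  omega

variable {K : Type*} [Field K] [LinearOrder K] [IsStrictOrderedRing K]

lemma sum_zpow_lt {x : K} (hx : 0 < x) (hx_sq : x + 1 ≤ x ^ 2) (hS : IsNonconsecutive S) {m : ℤ}
    (hm : ∀ k ∈ S, k ≤ m) : ∑ k ∈ S, x ^ k < x ^ (m + 1) := by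
  induction S using Finset.induction_on_max generalizing m with
  | empty => simpa using zpow_pos hx (m + 1)
  | insert a s has ih =>
    have hrest : ∑ k ∈ s, x ^ k < x ^ (a - 2 + 1) := by
      refine ih (hS.mono (subset_insert a s)) fun k hk ↦ ?_
      have := hS.add_two_le (mem_insert_of_mem hk) (mem_insert_self a s) (has k hk)
      omega
    have one_le_x : 1 ≤ x := by nlinarith
    calc ∑ k ∈ insert a s, x ^ k
        = x ^ a + ∑ k ∈ s, x ^ k := sum_insert fun ha ↦ (has a ha).false
      _ < x ^ a + x ^ (a - 2 + 1) := by gcongr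
      _ = x ^ (a - 1) * (x + 1) := by
          rw [mul_add_one, ← zpow_add_one₀ hx.ne', sub_add_cancel]; congr 2; ring
      _ ≤ x ^ (a - 1) * x ^ 2 := by gcongr
      _ = x ^ (a + 1) := by rw [← zpow_natCast, ← zpow_add₀ hx.ne']; congr 1; push_cast; ring
      _ ≤ x ^ (m + 1) := by gcongr; exact hm a (mem_insert_self a s)

lemma abs_sum_zpow_lt {y : K} (hy : y ≠ 0) (hy_sq : y ^ 2 + |y| ≤ 1) (hS : IsNonconsecutive S)
    {m : ℤ} (hm : ∀ k ∈ S, m ≤ k) : |∑ k ∈ S, y ^ k| < |y| ^ (m - 1) := by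
  have abs_y_pos : 0 < |y| := abs_pos.2 hy
  have inv_sq : |y|⁻¹ + 1 ≤ |y|⁻¹ ^ 2 := by
    rw [← sq_abs] at hy_sq
    field_simp
    linarith
  calc |∑ k ∈ S, y ^ k|
      ≤ ∑ k ∈ S, |y ^ k| := abs_sum_le_sum_abs _ _
    _ = ∑ k ∈ -S, |y|⁻¹ ^ k := by simp [sum_neg_index, abs_zpow]
    _ < |y|⁻¹ ^ (-m + 1) := by
        refine hS.neg.sum_zpow_lt (inv_pos.2 abs_y_pos) inv_sq fun k hk ↦ ?_
        have := hm _ (mem_neg'.1 hk)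
        omega
    _ = |y| ^ (m - 1) := by rw [inv_zpow', neg_add, neg_neg, sub_eq_add_neg]

lemma abs_sum_zpow_sub_zpow_least_lt {y : K} (hy : y ≠ 0) (hy_sq : y ^ 2 + |y| ≤ 1)
    (hS : IsNonconsecutive S) {i : ℤ} (hi : IsLeast (S : Set ℤ) i) :
    |∑ k ∈ S, y ^ k - y ^ i| < |y| ^ i := by
  have abs_le_one : |y| ≤ 1 := by nlinarith [sq_nonneg y]
  calc |∑ k ∈ S, y ^ k - y ^ i|
      = |∑ k ∈ S.erase i, y ^ k| := by rw [sum_erase_eq_sub hi.1]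
    _ < |y| ^ (i + 2 - 1) := by
        refine (hS.mono (erase_subset i S)).abs_sum_zpow_lt hy hy_sq fun k hk ↦ ?_
        obtain ⟨hki, hkS⟩ := mem_erase.1 hk
        exact hS.add_two_le hi.1 hkS ((hi.2 hkS).lt_of_ne' hki)
    _ ≤ |y| ^ i := zpow_le_zpow_right_of_le_one₀ (abs_pos.2 hy) abs_le_one (by omega)

lemma sum_zpow_lt_zero_of_odd_least {y : K} (hy : y < 0) (hy_sq : y ^ 2 + |y| ≤ 1)
    (hS : IsNonconsecutive S) {i : ℤ} (hi : IsLeast (S : Set ℤ) i) (hodd : Odd i) :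
    ∑ k ∈ S, y ^ k < 0 := by
  have hdom := (abs_lt.1 (hS.abs_sum_zpow_sub_zpow_least_lt hy.ne hy_sq hi)).2
  rw [← abs_zpow, abs_of_neg (hodd.zpow_neg hy)] at hdom
  linarith

end IsNonconsecutive

lemma sum_eq_sum_lt_add_ite_add_sum_gt {α M : Type*} [LinearOrder α] [AddCommMonoid M]
    (S : Finset α) (f : α → M) (a : α) :
    ∑ k ∈ S, f k = ∑ k ∈ S with k < a, f k + (if a ∈ S then f a else 0)
      + ∑ k ∈ S with a < k, f k := by
  rw [← sum_ite_eq' S a f, sum_filter, sum_filter, ← sum_add_distrib, ← sum_add_distrib]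
  refine sum_congr rfl fun k _ ↦ ?_
  rcases lt_trichotomy k a with h | rfl | h
  · simp [h, h.ne, h.not_gt]
  · simp
  · simp [h, h.ne', h.not_gt]

lemma goldenConj_sq_add_abs : ψ ^ 2 + |ψ| = 1 := by
  rw [abs_of_neg goldenConj_neg, goldenConj_sq]
  ring

lemma goldenRatio_zpow_eq_fib (n : ℤ) : φ ^ n = Int.fib (n + 1) - Int.fib n * ψ := by
  rw [coe_intFib_eq, coe_intFib_eq, zpow_add_one₀ goldenRatio_ne_zero,
    zpow_add_one₀ goldenConj_ne_zero, ← goldenRatio_sub_goldenConj]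
  have : φ - ψ ≠ 0 := by simp
  field_simp
  ring

lemma goldenConj_zpow_eq_fib (n : ℤ) : ψ ^ n = Int.fib (n + 1) - Int.fib n * φ := by
  have binet : φ ^ n - ψ ^ n = Int.fib n * (φ - ψ) := by
    rw [coe_intFib_eq, goldenRatio_sub_goldenConj, div_mul_cancel₀ _ (by positivity)]
  linear_combination goldenRatio_zpow_eq_fib n - binet

lemma sum_goldenConj_zpow_eq_of_sum_goldenRatio_zpow_eq {S : Finset ℤ} {q : ℚ}
    (h : ∑ k ∈ S, φ ^ k = q) : ∑ k ∈ S, ψ ^ k = q := by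
  set a : ℤ := ∑ k ∈ S, Int.fib (k + 1) with ha
  set b : ℤ := ∑ k ∈ S, Int.fib k with hb
  have hφ : ∑ k ∈ S, φ ^ k = a - b * ψ := by
    simp [goldenRatio_zpow_eq_fib, sum_sub_distrib, sum_mul, ha, hb]
  have hψ : ∑ k ∈ S, ψ ^ k = a - b * φ := by
    simp [goldenConj_zpow_eq_fib, sum_sub_distrib, sum_mul, ha, hb]
  have b_eq_zero : b = 0 := by
    by_contra hb0
    exact ((goldenConj_irrational.intCast_mul hb0).intCast_sub a).ne_rat q (hφ ▸ h)
  rw [← h, hφ, hψ, b_eq_zero]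
  simp

lemma lucasR_eq_fib (n : ℤ) : LucasR n = Int.fib (n + 1) + Int.fib (n - 1) := by
  have hrec : (Int.fib (n + 1) : ℝ) = Int.fib (n - 1) + Int.fib n := by
    have := Int.fib_add_two (n - 1)
    rw [show n - 1 + 2 = n + 1 by ring, sub_add_cancel] at this
    exact_mod_cast this
  change φ ^ n + ψ ^ n = _
  rw [goldenRatio_zpow_eq_fib, goldenConj_zpow_eq_fib]
  linear_combination hrec - Int.fib n * goldenRatio_add_goldenConj

lemma lucasR_neg (n : ℤ) : LucasR (-n) = (-1) ^ n * LucasR n := by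
  change φ ^ (-n) + ψ ^ (-n) = (-1) ^ n * (φ ^ n + ψ ^ n)
  rw [← inv_zpow', ← inv_zpow', inv_goldenRatio, inv_goldenConj, mul_add, ← mul_zpow, ← mul_zpow,
    neg_one_mul, neg_one_mul, add_comm]

lemma neg_one_pow_natAbs_mul_lucasR {k : ℤ} (hk : k ≤ 0) :
    (-1) ^ k.natAbs * LucasR k.natAbs = LucasR k := by
  rw [← zpow_natCast, ← lucasR_neg, Int.ofNat_natAbs_of_nonpos hk, neg_neg]

/-- The excess of the Lucas sum `∑_{k ∈ S, k < 0} L_k` over `∑_{k ∈ S} φ^k - d₀` when the latter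
sum is rational, written in terms of powers of `φ` and `ψ` only. -/
noncomputable def lucasExcess (S : Finset ℤ) : ℝ :=
  ∑ k ∈ S with k < 0, φ ^ k - ∑ k ∈ S with 0 < k, ψ ^ k

lemma sum_lucasR_eq_add_lucasExcess {S : Finset ℤ} {q : ℚ} (h : ∑ k ∈ S, φ ^ k = q) :
    ∑ k ∈ S with k < 0, LucasR k = q - (if (0 : ℤ) ∈ S then 1 else 0) + lucasExcess S := by
  have lucas_split : ∑ k ∈ S with k < 0, LucasR k
      = ∑ k ∈ S with k < 0, φ ^ k + ∑ k ∈ S with k < 0, ψ ^ k := sum_add_distrib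
  have conj_split := sum_eq_sum_lt_add_ite_add_sum_gt S (ψ ^ ·) 0
  rw [sum_goldenConj_zpow_eq_of_sum_goldenRatio_zpow_eq h, zpow_zero] at conj_split
  rw [lucas_split, lucasExcess]
  linear_combination -conj_split

lemma exists_intCast_eq_lucasExcess {S : Finset ℤ} {n : ℤ} (h : ∑ k ∈ S, φ ^ k = n) :
    ∃ z : ℤ, (z : ℝ) = lucasExcess S := by
  have hlucas := sum_lucasR_eq_add_lucasExcess (q := n) (by exact_mod_cast h)
  simp only [lucasR_eq_fib] at hlucas
  refine ⟨∑ k ∈ S with k < 0, (Int.fib (k + 1) + Int.fib (k - 1)) - n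
    + if (0 : ℤ) ∈ S then 1 else 0, ?_⟩
  push_cast at hlucas ⊢
  linear_combination hlucas

namespace IsNonconsecutive

variable {S : Finset ℤ} {i : ℤ}

lemma lucasExcess_mem_Ioo (hS : IsNonconsecutive S) (hi : IsLeast {k | k ∈ S ∧ 0 < k} i)
    (hodd : Odd i) : lucasExcess S ∈ Set.Ioo 0 2 := by
  have negSum_nonneg : 0 ≤ ∑ k ∈ S with k < 0, φ ^ k :=
    sum_nonneg fun k _ ↦ zpow_nonneg goldenRatio_pos.le k
  have negSum_lt_one : ∑ k ∈ S with k < 0, φ ^ k < 1 := by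
    refine ((hS.mono (filter_subset _ S)).sum_zpow_lt goldenRatio_pos goldenRatio_sq.ge
      (m := -1) fun k hk ↦ ?_).trans_eq (by simp)
    exact Int.le_sub_one_of_lt (mem_filter.1 hk).2
  have hpos : IsNonconsecutive {k ∈ S | 0 < k} := hS.mono (filter_subset _ S)
  have abs_posSum_lt_one : |∑ k ∈ S with 0 < k, ψ ^ k| < 1 := by
    simpa using hpos.abs_sum_zpow_lt goldenConj_ne_zero goldenConj_sq_add_abs.le (m := 1)
      fun k hk ↦ (mem_filter.1 hk).2
  have posSum_neg : ∑ k ∈ S with 0 < k, ψ ^ k < 0 :=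
    hpos.sum_zpow_lt_zero_of_odd_least goldenConj_neg goldenConj_sq_add_abs.le
      (by rwa [coe_filter]) hodd
  constructor <;> linarith [neg_lt_of_abs_lt abs_posSum_lt_one, lucasExcess.eq_def S]

lemma lucasExcess_eq_one (hS : IsNonconsecutive S) (hi : IsLeast {k | k ∈ S ∧ 0 < k} i)
    (hodd : Odd i) {n : ℤ} (h : ∑ k ∈ S, φ ^ k = n) : lucasExcess S = 1 := by
  obtain ⟨z, hz⟩ := exists_intCast_eq_lucasExcess h
  obtain ⟨hlower, hupper⟩ := hS.lucasExcess_mem_Ioo hi hodd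
  rw [← hz] at hlower hupper ⊢
  norm_cast at hlower hupper ⊢
  omega

end IsNonconsecutive

/-- Theorem 2 (odd case): if the smallest positive index `i` in the base-φ
representation `S` of `N` is odd, then `N = Σ_{k∈S, k<0} (−1)^{|k|} L_{|k|} + d_0 − 1`. -/
theorem stmt_2 (N : ℕ) (hN : 0 < N) (S : Finset ℤ)
    (hnc : ∀ k ∈ S, k + 1 ∉ S)
    (hrep : (N : ℝ) = ∑ k ∈ S, goldenPhi ^ k)
    (i : ℤ) (hiS : i ∈ S) (hipos : 0 < i)
    (hmin : ∀ j ∈ S, 0 < j → i ≤ j)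
    (hodd : Odd i) :
    (N : ℝ) = (∑ k ∈ S.filter (fun k => k < 0),
        (-1 : ℝ) ^ (k.natAbs) * LucasR (k.natAbs)) +
      (if (0 : ℤ) ∈ S then 1 else 0) - 1 := by
  have hsum : ∑ k ∈ S, φ ^ k = N := hrep.symm
  have hleast : IsLeast {k | k ∈ S ∧ 0 < k} i := ⟨⟨hiS, hipos⟩, fun j hj ↦ hmin j hj.1 hj.2⟩
  have hexcess : lucasExcess S = 1 :=
    IsNonconsecutive.lucasExcess_eq_one hnc hleast hodd (n := N) (by exact_mod_cast hsum)
  have hlucas := sum_lucasR_eq_add_lucasExcess (q := N) (by exact_mod_cast hsum)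
  rw [sum_congr rfl fun k hk ↦ neg_one_pow_natAbs_mul_lucasR (mem_filter.1 hk).2.le, hlucas,
    hexcess, Rat.cast_natCast]
  ring
end

section
/- Let N be a positive integer and let i_1, i_2, …, i_m be integers. If N = φ^{i_1} + φ^{i_2} + ⋯ + φ^{i_m}, then for every integer n, N·L_n = L_{n+i_1} + L_{n+i_2} + ⋯ + L_{n+i_m}. -/
/-!
Every two-sided solution `G` of the Fibonacci recurrence satisfies
`G (n + k) = F_k G (n + 1) + F_{k-1} G n`. Applied to the powers of `φ`, this turns a relation
`a = ∑ c_k φ^{i_k}` into `a = (∑ c_k F_{i_k}) φ + ∑ c_k F_{i_k - 1}`; as `φ` is irrational,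
`∑ c_k F_{i_k} = 0` and `∑ c_k F_{i_k - 1} = a`. Applied to the Lucas numbers, it then gives
`∑ c_k L_{n + i_k} = 0 * L_{n+1} + a * L_n`.
-/

/-- A two-sided sequence satisfying the Fibonacci recurrence. The Lucas numbers and the integer
powers of the golden ratio are both of this kind, which lets relations pass from one to the
other. -/
def IsFibonacciLike {M : Type*} [Add M] (G : ℤ → M) : Prop :=
  ∀ n, G (n + 2) = G n + G (n + 1)

namespace IsFibonacciLike

theorem add {M : Type*} [AddCommSemigroup M] {G H : ℤ → M} (hG : IsFibonacciLike G)
    (hH : IsFibonacciLike H) : IsFibonacciLike (G + H) := fun n => by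
  simp only [Pi.add_apply, hG n, hH n, add_add_add_comm]

theorem zpow {K : Type*} [DivisionRing K] {x : K} (hx : x ^ 2 = x + 1) :
    IsFibonacciLike fun n : ℤ => x ^ n := fun n => by
  have hx₀ : x ≠ 0 := by
    rintro rfl
    simp at hx
  calc x ^ (n + 2) = x ^ n * x ^ 2 := by rw [zpow_add₀ hx₀, zpow_ofNat]
    _ = x ^ n + x ^ (n + 1) := by rw [hx, mul_add_one, zpow_add_one₀ hx₀, add_comm]

theorem apply_add_one {M : Type*} [Add M] {G : ℤ → M} (hG : IsFibonacciLike G) (n : ℤ) :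
    G (n + 1) = G (n - 1) + G n := by
  have h := hG (n - 1)
  rwa [sub_add_cancel, show n - 1 + 2 = n + 1 by ring] at h

theorem apply_add {M : Type*} [AddCommGroup M] {G : ℤ → M} (hG : IsFibonacciLike G) (n k : ℤ) :
    G (n + k) = Int.fib k • G (n + 1) + Int.fib (k - 1) • G n := by
  have hfib : IsFibonacciLike Int.fib := Int.fib_add_two
  induction k using Int.induction_on generalizing n with
  | zero => simp
  | succ k ih =>
    rw [show n + (k + 1 : ℤ) = n + 1 + k by ring, ih (n + 1), hG.apply_add_one (n + 1),
      hfib.apply_add_one k, add_sub_cancel_right, add_sub_cancel_right]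
    module
  | pred k ih =>
    have hfib_neg : Int.fib (-k) = Int.fib (-k - 1 - 1) + Int.fib (-k - 1) := by
      simpa only [sub_add_cancel] using hfib.apply_add_one (-k - 1)
    rw [show n + (-k - 1 : ℤ) = n - 1 + -k by ring, ih (n - 1), hG.apply_add_one n, hfib_neg,
      sub_add_cancel]
    module

theorem sum_smul_apply_add {M : Type*} [AddCommGroup M] {G : ℤ → M} (hG : IsFibonacciLike G)
    {ι : Type*} (s : Finset ι) (c i : ι → ℤ) (n : ℤ) :
    ∑ k ∈ s, c k • G (n + i k) =
      (∑ k ∈ s, c k * Int.fib (i k)) • G (n + 1) +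
        (∑ k ∈ s, c k * Int.fib (i k - 1)) • G n := by
  rw [Finset.sum_smul, Finset.sum_smul, ← Finset.sum_add_distrib]
  refine Finset.sum_congr rfl fun k _ => ?_
  rw [hG.apply_add n (i k), smul_add, smul_smul, smul_smul]

end IsFibonacciLike

theorem goldenPhi_sq : goldenPhi ^ 2 = goldenPhi + 1 := Real.goldenRatio_sq

theorem goldenPhiBar_sq : goldenPhiBar ^ 2 = goldenPhiBar + 1 := Real.goldenConj_sq

theorem irrational_goldenPhi : Irrational goldenPhi := Real.goldenRatio_irrational

theorem isFibonacciLike_lucasR : IsFibonacciLike LucasR :=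
  (IsFibonacciLike.zpow goldenPhi_sq).add (IsFibonacciLike.zpow goldenPhiBar_sq)

theorem eq_zero_and_eq_of_ratCast_eq_mul_irrational_add {x : ℝ} (hx : Irrational x) {a b c : ℚ}
    (h : (a : ℝ) = b * x + c) : b = 0 ∧ c = a := by
  have hb : b = 0 := by
    by_contra hb
    exact ((hx.ratCast_mul hb).add_ratCast c).ne_rat a h.symm
  subst hb
  exact ⟨rfl, by simpa [eq_comm] using h⟩

theorem sum_mul_fib_of_eq_sum_goldenPhi_zpow {ι : Type*} {s : Finset ι} {c i : ι → ℤ} {a : ℤ}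
    (h : (a : ℝ) = ∑ k ∈ s, c k * goldenPhi ^ i k) :
    ∑ k ∈ s, c k * Int.fib (i k) = 0 ∧ ∑ k ∈ s, c k * Int.fib (i k - 1) = a := by
  have hcoords : (a : ℝ) = (∑ k ∈ s, c k * Int.fib (i k) : ℤ) * goldenPhi +
      (∑ k ∈ s, c k * Int.fib (i k - 1) : ℤ) := by
    simpa [← h] using (IsFibonacciLike.zpow goldenPhi_sq).sum_smul_apply_add s c i 0
  exact_mod_cast eq_zero_and_eq_of_ratCast_eq_mul_irrational_add irrational_goldenPhi
    (mod_cast hcoords)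

theorem stmt_5_general {M : Type*} [AddCommGroup M] {G : ℤ → M} (hG : IsFibonacciLike G)
    {ι : Type*} {s : Finset ι} {c i : ι → ℤ} {a : ℤ}
    (h : (a : ℝ) = ∑ k ∈ s, c k * goldenPhi ^ i k) (n : ℤ) :
    a • G n = ∑ k ∈ s, c k • G (n + i k) := by
  obtain ⟨hfib, hfib_pred⟩ := sum_mul_fib_of_eq_sum_goldenPhi_zpow h
  rw [hG.sum_smul_apply_add, hfib, hfib_pred, zero_smul, zero_add]

/-- If `N = φ^{i_1} + ⋯ + φ^{i_m}`, then `N·L_n = L_{n+i_1} + ⋯ + L_{n+i_m}`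
for every integer `n`. -/
theorem stmt_5 (N : ℕ) (hN : 0 < N) (m : ℕ) (i : Fin m → ℤ)
    (h : (N : ℝ) = ∑ k, goldenPhi ^ (i k)) :
    ∀ n : ℤ, (N : ℝ) * LucasR n = ∑ k, LucasR (n + i k) := by
  intro n
  simpa using stmt_5_general isFibonacciLike_lucasR (a := N) (c := 1) (by simpa using h) n
end

section
/- Let N be a positive integer and let i_1, i_2, …, i_m be integers. If for every integer n one has N·F_n = F_{n+i_1} + F_{n+i_2} + ⋯ + F_{n+i_m}, then N = φ^{i_1} + φ^{i_2} + ⋯ + φ^{i_m}. -/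
/-- Fibonacci numbers extended to all integer indices: F n = (φ^n − φ̄^n)/√5. -/
noncomputable def FibR (n : ℤ) : ℝ := (goldenPhi ^ n - goldenPhiBar ^ n) / Real.sqrt 5

/-!
The combination `F_{n+1} - φ̄ F_n` kills the `φ̄`-component of Binet's formula and equals `φ ^ n`.
Applied to the relations `c F_n = ∑ F_{n+i_k}` at two consecutive indices `n` and `n + 1`, it gives
`c φ ^ n = ∑ φ ^ (n + i_k)`, and `φ ^ n` cancels.
-/

theorem zpow_sub_zpow_add_one_sub_mul {K : Type*} [Field K] {a b : K} (ha : a ≠ 0) (hb : b ≠ 0)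
    (n : ℤ) : (a ^ (n + 1) - b ^ (n + 1)) - b * (a ^ n - b ^ n) = (a - b) * a ^ n := by
  rw [zpow_add_one₀ ha, zpow_add_one₀ hb]
  ring

theorem goldenPhi_ne_zero : goldenPhi ≠ 0 := Real.goldenRatio_ne_zero

theorem goldenPhiBar_ne_zero : goldenPhiBar ≠ 0 := Real.goldenConj_ne_zero

theorem goldenPhi_sub_goldenPhiBar : goldenPhi - goldenPhiBar = √5 :=
  Real.goldenRatio_sub_goldenConj

theorem fibR_add_one_sub_goldenPhiBar_mul (n : ℤ) :
    FibR (n + 1) - goldenPhiBar * FibR n = goldenPhi ^ n := by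
  have sqrt_five_ne_zero : √5 ≠ 0 := by positivity
  rw [FibR, FibR, ← mul_div_assoc, ← sub_div,
    zpow_sub_zpow_add_one_sub_mul goldenPhi_ne_zero goldenPhiBar_ne_zero,
    goldenPhi_sub_goldenPhiBar, mul_div_cancel_left₀ _ sqrt_five_ne_zero]

theorem stmt_6_general {ι : Type*} (s : Finset ι) (i : ι → ℤ) (c : ℝ) (n : ℤ)
    (h : c * FibR n = ∑ k ∈ s, FibR (n + i k))
    (h_succ : c * FibR (n + 1) = ∑ k ∈ s, FibR (n + 1 + i k)) :
    c = ∑ k ∈ s, goldenPhi ^ i k := by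
  refine mul_left_cancel₀ (zpow_ne_zero n goldenPhi_ne_zero) ?_
  calc goldenPhi ^ n * c
      = c * FibR (n + 1) - goldenPhiBar * (c * FibR n) := by
        rw [← fibR_add_one_sub_goldenPhiBar_mul]
        ring
    _ = ∑ k ∈ s, (FibR (n + i k + 1) - goldenPhiBar * FibR (n + i k)) := by
        simp only [h, h_succ, Finset.mul_sum, Finset.sum_sub_distrib, add_right_comm n 1]
    _ = goldenPhi ^ n * ∑ k ∈ s, goldenPhi ^ i k := by
        simp only [fibR_add_one_sub_goldenPhiBar_mul, zpow_add₀ goldenPhi_ne_zero,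
          Finset.mul_sum]

/-- If `N·F_n = F_{n+i_1} + ⋯ + F_{n+i_m}` for every integer `n`, then
`N = φ^{i_1} + ⋯ + φ^{i_m}`. -/
theorem stmt_6 (N : ℕ) (hN : 0 < N) (m : ℕ) (i : Fin m → ℤ)
    (h : ∀ n : ℤ, (N : ℝ) * FibR n = ∑ k, FibR (n + i k)) :
    (N : ℝ) = ∑ k, goldenPhi ^ (i k) :=
  stmt_6_general Finset.univ i N 0 (h 0) (h (0 + 1))
end

section
/- Let k_1 > k_2 > ⋯ > k_s be integers (s ≥ 1) such that the gap between every two consecutive terms is at least 2, that is, k_j − k_{j+1} ≥ 2 for all 1 ≤ j ≤ s−1. Then φ^{k_1} + φ^{k_2} + ⋯ + φ^{k_s} < φ^{k_1 + 1}. -/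
/-!
The only property of `f n = φ ^ n` that matters is `f n + f (n - 1) ≤ f (n + 1)` with positive
values. Peel off the leading term: inductively the remaining ones sum to less than
`f (k 1 + 1) ≤ f (k 0 - 1)`, and `f (k 0) + f (k 0 - 1) ≤ f (k 0 + 1)`.
-/

section OrderedMonoid

variable {M : Type*} [AddCommMonoid M] [PartialOrder M] [IsOrderedCancelAddMonoid M] {f : ℤ → M}

lemma strictMono_int_of_pos_of_add_le (hpos : ∀ n, 0 < f n)
    (hadd : ∀ n, f n + f (n - 1) ≤ f (n + 1)) : StrictMono f :=
  strictMono_int_of_lt_succ fun n => (lt_add_of_pos_right (f n) (hpos (n - 1))).trans_le (hadd n)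

lemma sum_range_lt_apply_add_one_of_add_le (hpos : ∀ n, 0 < f n)
    (hadd : ∀ n, f n + f (n - 1) ≤ f (n + 1)) {s : ℕ} (hs : 1 ≤ s) {k : ℕ → ℤ}
    (hgap : ∀ j, j + 1 < s → 2 ≤ k j - k (j + 1)) :
    ∑ j ∈ Finset.range s, f (k j) < f (k 0 + 1) := by
  have hmono : StrictMono f := strictMono_int_of_pos_of_add_le hpos hadd
  induction s, hs using Nat.le_induction generalizing k with
  | base => simpa only [Finset.sum_range_one] using hmono (lt_add_one (k 0))
  | succ n hn ih =>
    have htail : ∑ j ∈ Finset.range n, f (k (j + 1)) < f (k 1 + 1) :=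
      ih fun j hj => hgap (j + 1) (by lia)
    have hlead : k 1 + 1 ≤ k 0 - 1 := by linarith [hgap 0 (by lia)]
    calc ∑ j ∈ Finset.range (n + 1), f (k j)
        = f (k 0) + ∑ j ∈ Finset.range n, f (k (j + 1)) := by
          rw [Finset.sum_range_succ', add_comm]
      _ < f (k 0) + f (k 1 + 1) := by gcongr
      _ ≤ f (k 0) + f (k 0 - 1) := by gcongr; exact hmono.monotone hlead
      _ ≤ f (k 0 + 1) := hadd (k 0)

end OrderedMonoid

section OrderedDivisionSemiring

variable {K : Type*} [DivisionSemiring K] [LinearOrder K] [IsStrictOrderedRing K] {x : K}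

lemma zpow_add_zpow_sub_one_le (hx : 0 < x) (hsq : x + 1 ≤ x ^ 2) (n : ℤ) :
    x ^ n + x ^ (n - 1) ≤ x ^ (n + 1) :=
  calc x ^ n + x ^ (n - 1) = x ^ (n - 1) * (x + 1) := by
        rw [mul_add, mul_one, ← zpow_add_one₀ hx.ne', sub_add_cancel]
    _ ≤ x ^ (n - 1) * x ^ 2 := mul_le_mul_of_nonneg_left hsq (zpow_pos hx _).le
    _ = x ^ (n + 1) := by
        rw [← zpow_natCast, ← zpow_add₀ hx.ne']
        congr 1
        lia

theorem stmt_8_general (hx : 0 < x) (hsq : x + 1 ≤ x ^ 2) {s : ℕ} (hs : 1 ≤ s) {k : ℕ → ℤ}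
    (hgap : ∀ j, j + 1 < s → 2 ≤ k j - k (j + 1)) :
    ∑ j ∈ Finset.range s, x ^ k j < x ^ (k 0 + 1) :=
  sum_range_lt_apply_add_one_of_add_le (zpow_pos hx) (zpow_add_zpow_sub_one_le hx hsq) hs hgap

end OrderedDivisionSemiring

/-- Lemma 1: for integers `k 0 > k 1 > ⋯ > k (s-1)` with consecutive gaps at
least 2, we have `φ^{k_1} + ⋯ + φ^{k_s} < φ^{k_1 + 1}`. -/
theorem stmt_8 (s : ℕ) (hs : 1 ≤ s) (k : ℕ → ℤ)
    (hgap : ∀ j, j + 1 < s → k j - k (j + 1) ≥ 2) :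
    ∑ j ∈ Finset.range s, goldenPhi ^ (k j) < goldenPhi ^ (k 0 + 1) :=
  stmt_8_general Real.goldenRatio_pos Real.goldenRatio_sq.ge hs hgap
end

section
/- Let k_1 > k_2 > ⋯ > k_s be integers (s ≥ 1) such that k_j − k_{j+1} ≥ 2 for all 1 ≤ j ≤ s−1. If k_1 is odd, then (−1)^{k_1} φ^{k_1} + (−1)^{k_2} φ^{k_2} + ⋯ + (−1)^{k_s} φ^{k_s} < 0. -/
/-!
Since `φ ^ 2 = φ + 1 ≥ 2`, lowering the exponent by at least `2` at least halves the power of `φ`.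
In a sequence that at least halves at every step, the terms after the first telescope to at most
the first term minus the last one. So the leading term `-φ ^ k 0` outweighs all the others, whatever
their signs.
-/

lemma sum_range_succ_le_sub_of_two_nsmul_le {G : Type*} [AddCommGroup G] [PartialOrder G]
    [IsOrderedAddMonoid G] {a : ℕ → G} {n : ℕ} (halve : ∀ j < n, 2 • a (j + 1) ≤ a j) :
    ∑ j ∈ Finset.range n, a (j + 1) ≤ a 0 - a n := by
  rw [← Finset.sum_range_sub']
  refine Finset.sum_le_sum fun j hj ↦ le_sub_iff_add_le.2 ?_
  simpa only [two_nsmul] using halve j (Finset.mem_range.1 hj)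

section OrderedField

variable {K : Type*} [Field K] [LinearOrder K] [IsStrictOrderedRing K] {x : K}

lemma neg_one_zpow_mul_zpow_le (hx : 0 ≤ x) (n : ℤ) : (-1) ^ n * x ^ n ≤ x ^ n := by
  rw [← mul_zpow, neg_one_mul]
  calc (-x) ^ n ≤ |(-x) ^ n| := le_abs_self _
    _ = x ^ n := by rw [abs_zpow, abs_neg, abs_of_nonneg hx]

lemma two_mul_zpow_le_zpow_of_le_sub (hx : 1 ≤ x) {d m n : ℤ} (hd : 2 ≤ x ^ d)
    (hmn : d ≤ m - n) : 2 * x ^ n ≤ x ^ m := by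
  have hpos : 0 < x := zero_lt_one.trans_le hx
  calc 2 * x ^ n ≤ x ^ d * x ^ n := by gcongr
    _ = x ^ (d + n) := (zpow_add₀ hpos.ne' d n).symm
    _ ≤ x ^ m := zpow_le_zpow_right₀ hx (le_sub_iff_add_le.1 hmn)

lemma sum_zpow_succ_lt_zpow_zero (hx : 1 ≤ x) {d : ℤ} (hd : 2 ≤ x ^ d) {n : ℕ} {k : ℕ → ℤ}
    (hgap : ∀ j < n, d ≤ k j - k (j + 1)) :
    ∑ j ∈ Finset.range n, x ^ k (j + 1) < x ^ k 0 :=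
  calc ∑ j ∈ Finset.range n, x ^ k (j + 1) ≤ x ^ k 0 - x ^ k n :=
        sum_range_succ_le_sub_of_two_nsmul_le (a := fun j ↦ x ^ k j) fun j hj ↦ by
          simpa only [nsmul_eq_mul, Nat.cast_ofNat] using
            two_mul_zpow_le_zpow_of_le_sub hx hd (hgap j hj)
    _ < x ^ k 0 := sub_lt_self _ (zpow_pos (zero_lt_one.trans_le hx) _)

theorem stmt_10_general (hx : 1 ≤ x) {d : ℤ} (hd : 2 ≤ x ^ d) {s : ℕ} (hs : 1 ≤ s) {k : ℕ → ℤ}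
    (hgap : ∀ j, j + 1 < s → d ≤ k j - k (j + 1)) (hodd : Odd (k 0)) :
    ∑ j ∈ Finset.range s, (-1) ^ k j * x ^ k j < 0 := by
  obtain ⟨n, rfl⟩ := Nat.exists_eq_add_of_le' hs
  have tail_lt : ∑ j ∈ Finset.range n, (-1) ^ k (j + 1) * x ^ k (j + 1) < x ^ k 0 :=
    calc ∑ j ∈ Finset.range n, (-1) ^ k (j + 1) * x ^ k (j + 1)
        ≤ ∑ j ∈ Finset.range n, x ^ k (j + 1) :=
          Finset.sum_le_sum fun j _ ↦ neg_one_zpow_mul_zpow_le (zero_le_one.trans hx) _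
      _ < x ^ k 0 := sum_zpow_succ_lt_zpow_zero hx hd fun j hj ↦ hgap j (Nat.succ_lt_succ hj)
  rwa [Finset.sum_range_succ', hodd.neg_one_zpow, neg_one_mul, ← sub_eq_add_neg, sub_neg]

end OrderedField

lemma one_lt_goldenPhi : 1 < goldenPhi := Real.one_lt_goldenRatio

lemma two_le_goldenPhi_sq : 2 ≤ goldenPhi ^ 2 := by
  have hsq : goldenPhi ^ 2 = goldenPhi + 1 := Real.goldenRatio_sq
  linarith [one_lt_goldenPhi]

/-- Lemma 2 (odd case): for integers `k 0 > k 1 > ⋯ > k (s-1)` with consecutive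
gaps at least 2 and `k 0` odd, `(−1)^{k_1} φ^{k_1} + ⋯ + (−1)^{k_s} φ^{k_s} < 0`. -/
theorem stmt_10 (s : ℕ) (hs : 1 ≤ s) (k : ℕ → ℤ)
    (hgap : ∀ j, j + 1 < s → k j - k (j + 1) ≥ 2)
    (hodd : Odd (k 0)) :
    ∑ j ∈ Finset.range s, (-1 : ℝ) ^ (k j) * goldenPhi ^ (k j) < 0 :=
  stmt_10_general one_lt_goldenPhi.le (mod_cast two_le_goldenPhi_sq) hs hgap hodd
end

section
/- Let i_1 > i_2 > ⋯ > i_m be positive integers (m ≥ 1) such that i_k − i_{k+1} ≥ 2 for all 1 ≤ k ≤ m−1. If the smallest term i_m is odd, then −1 < (−1)^{i_1} φ^{−i_1} + (−1)^{i_2} φ^{−i_2} + ⋯ + (−1)^{i_m} φ^{−i_m} < 0; if i_m is even, then 0 < (−1)^{i_1} φ^{−i_1} + (−1)^{i_2} φ^{−i_2} + ⋯ + (−1)^{i_m} φ^{−i_m} < 1. -/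
/-!
With `q = φ⁻¹` the sum is `S = ∑ (-q) ^ i_k`, and the only property of `q > 0` that matters is
`q + q ^ 2 ≤ 1`. If `n` is the smallest index, then `q ^ (n + 1) < (-1) ^ n * S < q ^ (n - 1)`, by
induction on the number of terms: when a new smallest index `n` is adjoined, the old signed sum `t`
turns into `q ^ n + t` if the gap is even and into `q ^ n - t` if it is odd. In the first case
`t < q ^ (n + 1)`; in the second the gap is at least 3, so `t < q ^ (n + 2)`. Both bounds then
follow from `q ^ (k + 1) + q ^ (k + 2) ≤ q ^ k`. Since `n ≥ 1`, they lie between 0 and 1.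
-/

section

open Finset

variable {K : Type*} [Field K] [LinearOrder K] [IsStrictOrderedRing K] {q : K}

theorem lt_one_of_add_sq_le_one (hq : 0 < q) (hq' : q + q ^ 2 ≤ 1) : q < 1 := by
  linarith [pow_pos hq 2]

theorem zpow_add_one_add_zpow_add_two_le (hq : 0 < q) (hq' : q + q ^ 2 ≤ 1) (n : ℤ) :
    q ^ (n + 1) + q ^ (n + 2) ≤ q ^ n :=
  calc q ^ (n + 1) + q ^ (n + 2) = q ^ n * (q + q ^ 2) := by
        rw [zpow_add₀ hq.ne', zpow_add₀ hq.ne', zpow_one, zpow_ofNat, mul_add]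
    _ ≤ q ^ n := mul_le_of_le_one_right (zpow_pos hq n).le hq'

theorem zpow_add_neg_one_zpow_mul_mem_Ioo (hq : 0 < q) (hq' : q + q ^ 2 ≤ 1) {n a : ℤ}
    (hna : n + 2 ≤ a) {t : K} (ht : t ∈ Set.Ioo 0 (q ^ (a - 1))) :
    q ^ n + (-1) ^ (n - a) * t ∈ Set.Ioo (q ^ (n + 1)) (q ^ (n - 1)) := by
  obtain ⟨t_pos, t_lt⟩ := ht
  have hq1 := lt_one_of_add_sq_le_one hq hq'
  have t_lt_zpow {b : ℤ} (hb : b ≤ a - 1) : t < q ^ b :=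
    t_lt.trans_le (zpow_le_zpow_right_of_le_one₀ hq hq1.le hb)
  have zpow_lt {b c : ℤ} (hbc : b < c) : q ^ c < q ^ b := zpow_lt_zpow_right_of_lt_one₀ hq hq1 hbc
  rcases Int.even_or_odd (n - a) with gap_even | gap_odd
  · rw [gap_even.neg_one_zpow, one_mul]
    have upper : q ^ n + q ^ (n + 1) ≤ q ^ (n - 1) := by
      convert zpow_add_one_add_zpow_add_two_le hq hq' (n - 1) using 3 <;> ring
    constructor
    · linarith [zpow_lt (lt_add_one n)]
    · linarith [t_lt_zpow (b := n + 1) (by lia)]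
  · rw [gap_odd.neg_one_zpow, neg_one_mul]
    have gap_ge_three : n + 3 ≤ a := by grind
    constructor
    · linarith [zpow_add_one_add_zpow_add_two_le hq hq' n, t_lt_zpow (b := n + 2) (by lia)]
    · linarith [zpow_lt (sub_one_lt n)]

theorem neg_one_zpow_mul_sum_neg_zpow_mem_Ioo (hq : 0 < q) (hq' : q + q ^ 2 ≤ 1) (m : ℕ)
    (i : ℕ → ℤ) (hgap : ∀ k < m, i (k + 1) + 2 ≤ i k) :
    (-1) ^ i m * ∑ k ∈ range (m + 1), (-q) ^ i k ∈ Set.Ioo (q ^ (i m + 1)) (q ^ (i m - 1)) := by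
  have signed_term (n : ℤ) : (-1) ^ n * (-q) ^ n = q ^ n := by
    rw [← mul_zpow, neg_one_mul, neg_neg]
  induction m with
  | zero =>
    have hq1 := lt_one_of_add_sq_le_one hq hq'
    rw [zero_add, sum_range_one, signed_term]
    exact ⟨zpow_lt_zpow_right_of_lt_one₀ hq hq1 (lt_add_one _),
      zpow_lt_zpow_right_of_lt_one₀ hq hq1 (sub_one_lt _)⟩
  | succ m ih =>
    obtain ⟨lower, upper⟩ := ih fun k hk ↦ hgap k (hk.trans m.lt_succ_self)
    have signed_sum_succ : (-1) ^ i (m + 1) * ∑ k ∈ range (m + 1 + 1), (-q) ^ i k =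
        q ^ i (m + 1) +
          (-1) ^ (i (m + 1) - i m) * ((-1) ^ i m * ∑ k ∈ range (m + 1), (-q) ^ i k) := by
      rw [← mul_assoc, ← zpow_add₀ (neg_ne_zero.mpr one_ne_zero), sub_add_cancel,
        sum_range_succ_comm, mul_add, signed_term]
    rw [signed_sum_succ]
    exact zpow_add_neg_one_zpow_mul_mem_Ioo hq hq' (hgap m m.lt_succ_self)
      ⟨(zpow_pos hq _).trans lower, upper⟩

theorem stmt_14_general (hq : 0 < q) (hq' : q + q ^ 2 ≤ 1) (m : ℕ) (i : ℕ → ℤ) (hpos : 0 < i m)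
    (hgap : ∀ k < m, i (k + 1) + 2 ≤ i k) :
    (Odd (i m) →
      -1 < ∑ k ∈ range (m + 1), (-q) ^ i k ∧ ∑ k ∈ range (m + 1), (-q) ^ i k < 0) ∧
    (Even (i m) →
      0 < ∑ k ∈ range (m + 1), (-q) ^ i k ∧ ∑ k ∈ range (m + 1), (-q) ^ i k < 1) := by
  obtain ⟨lower, upper⟩ := neg_one_zpow_mul_sum_neg_zpow_mem_Ioo hq hq' m i hgap
  have signed_pos := (zpow_pos hq _).trans lower
  have signed_lt_one := upper.trans_le <|
    zpow_le_one₀ hq (lt_one_of_add_sq_le_one hq hq').le (Int.le_sub_one_of_lt hpos)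
  constructor
  · intro smallest_odd
    rw [smallest_odd.neg_one_zpow, neg_one_mul] at signed_pos signed_lt_one
    exact ⟨neg_lt.mp signed_lt_one, neg_pos.mp signed_pos⟩
  · intro smallest_even
    rw [smallest_even.neg_one_zpow, one_mul] at signed_pos signed_lt_one
    exact ⟨signed_pos, signed_lt_one⟩

end

theorem inv_goldenPhi_pos : 0 < goldenPhi⁻¹ :=
  inv_pos.mpr Real.goldenRatio_pos

theorem inv_goldenPhi_add_sq : goldenPhi⁻¹ + goldenPhi⁻¹ ^ 2 = 1 := by
  change Real.goldenRatio⁻¹ + Real.goldenRatio⁻¹ ^ 2 = 1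
  rw [Real.inv_goldenRatio, neg_sq, Real.goldenConj_sq, neg_add_cancel_left]

theorem neg_one_zpow_mul_goldenPhi_zpow_neg (n : ℤ) :
    (-1) ^ n * goldenPhi ^ (-n) = (-goldenPhi⁻¹) ^ n := by
  rw [← inv_zpow', ← mul_zpow, neg_one_mul]

/-- For positive integers `i 0 > i 1 > ⋯ > i (m-1)` with consecutive gaps at
least 2: if the smallest term `i (m-1)` is odd then
`−1 < Σ (−1)^{i_k} φ^{−i_k} < 0`; if it is even then `0 < Σ (−1)^{i_k} φ^{−i_k} < 1`. -/
theorem stmt_14 (m : ℕ) (hm : 1 ≤ m) (i : ℕ → ℤ)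
    (hpos : ∀ k, k < m → 0 < i k)
    (hgap : ∀ k, k + 1 < m → i k - i (k + 1) ≥ 2) :
    (Odd (i (m - 1)) →
      -1 < ∑ k ∈ Finset.range m, (-1 : ℝ) ^ (i k) * goldenPhi ^ (-(i k)) ∧
      ∑ k ∈ Finset.range m, (-1 : ℝ) ^ (i k) * goldenPhi ^ (-(i k)) < 0) ∧
    (Even (i (m - 1)) →
      0 < ∑ k ∈ Finset.range m, (-1 : ℝ) ^ (i k) * goldenPhi ^ (-(i k)) ∧
      ∑ k ∈ Finset.range m, (-1 : ℝ) ^ (i k) * goldenPhi ^ (-(i k)) < 1) := by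
  obtain ⟨n, rfl⟩ := Nat.exists_eq_add_of_le' hm
  simp only [neg_one_zpow_mul_goldenPhi_zpow_neg, Nat.add_sub_cancel]
  exact stmt_14_general inv_goldenPhi_pos inv_goldenPhi_add_sq.le n i (hpos n n.lt_succ_self)
    fun k hk ↦ by linarith [hgap k (Nat.succ_lt_succ hk)]
end
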